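/- Let n ≥ 1, let V : ℝⁿ → ℝ and W : ℝ × ℝⁿ → ℝ be smooth with V, W and all their derivatives bounded, and let ψ : ℝ × ℝⁿ → ℂ be smooth such that for each t the functions ψ(t,·) and ∂ₜψ(t,·) are Schwartz, with Schwartz seminorms locally bounded in t, and ψ satisfies i∂ₜψ(t,x) = −Δψ(t,x) + V(x)ψ(t,x) + W(t,x)ψ(t,x) on ℝ × ℝⁿ. Then for every t > 0 the function t ↦ (1/t)‖(x−2pt)ψ(t)‖² + 4t ∫_{ℝⁿ}(V(x)+W(t,x))|ψ(t,x)|² dx is differentiable with derivative equal to −(1/t²)‖(x−2pt)ψ(t)‖² + 4∫_{ℝⁿ}(x·∇V(x) + V(x))|ψ(t,x)|² dx + 4∫_{ℝⁿ}(x·∇ₓW(t,x) + W(t,x))|ψ(t,x)|² dx + 4t∫_{ℝⁿ} ∂ₜW(t,x) |ψ(t,x)|² dx. -/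

import Mathlib

open MeasureTheory Complex

noncomputable section

/-- Partial derivative in the `i`-th coordinate direction. -/
def pd {n : ℕ} (f : EuclideanSpace ℝ (Fin n) → ℂ) (i : Fin n)
    (x : EuclideanSpace ℝ (Fin n)) : ℂ :=
  fderiv ℝ f x (EuclideanSpace.single i 1)

/-- The Laplacian `Δf = ∑ i ∂²f/∂xᵢ²`. -/
def lap {n : ℕ} (f : EuclideanSpace ℝ (Fin n) → ℂ)
    (x : EuclideanSpace ℝ (Fin n)) : ℂ :=
  ∑ i, pd (fun y => pd f i y) i x

/-- Squared norm of the gradient, `‖∇f(x)‖²_{ℂⁿ} = ∑ i ‖∂ᵢf(x)‖²`. -/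
def gradNormSq {n : ℕ} (f : EuclideanSpace ℝ (Fin n) → ℂ)
    (x : EuclideanSpace ℝ (Fin n)) : ℝ :=
  ∑ i, ‖pd f i x‖ ^ 2

/-- `x·∇V(x) = ∑ i xᵢ ∂V/∂xᵢ(x)` for a real-valued potential `V`. -/
def xdotGrad {n : ℕ} (V : EuclideanSpace ℝ (Fin n) → ℝ)
    (x : EuclideanSpace ℝ (Fin n)) : ℝ :=
  ∑ i, x i * fderiv ℝ V x (EuclideanSpace.single i 1)

/-- Time derivative `∂ₜψ(t,x)`. -/
def tderiv {n : ℕ} (ψ : ℝ → EuclideanSpace ℝ (Fin n) → ℂ) (t : ℝ)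
    (x : EuclideanSpace ℝ (Fin n)) : ℂ :=
  deriv (fun s => ψ s x) t

/-- `ψ(t,·)` is Schwartz for each `t`, with Schwartz seminorms locally bounded
in `t`: on each compact time interval all weighted derivative bounds are uniform. -/
def LocUnifSchwartz {n : ℕ} (ψ : ℝ → EuclideanSpace ℝ (Fin n) → ℂ) : Prop :=
  ∀ (k m : ℕ) (T : ℝ), ∃ C : ℝ, ∀ t ∈ Set.Icc (-T) T,
    ∀ x : EuclideanSpace ℝ (Fin n),
      ‖x‖ ^ k * ‖iteratedFDeriv ℝ m (ψ t) x‖ ≤ C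

/-- The conformal factor `‖(x−2pt)ψ(t)‖² = ∫_{ℝⁿ} ‖xψ(t,x) + 2it∇ₓψ(t,x)‖²_{ℂⁿ} dx`. -/
def conformalFactor {n : ℕ} (ψ : ℝ → EuclideanSpace ℝ (Fin n) → ℂ) (t : ℝ) : ℝ :=
  ∫ x : EuclideanSpace ℝ (Fin n),
    ∑ i, ‖(x i : ℂ) * ψ t x + 2 * Complex.I * (t : ℂ) * pd (ψ t) i x‖ ^ 2

/-! ### Space-time calculus -/

/-- Space-time. -/
abbrev SpT (n : ℕ) := ℝ × EuclideanSpace ℝ (Fin n)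

/-- Directional derivative on space-time. -/
def DD {n : ℕ} {F : Type*} [NormedAddCommGroup F] [NormedSpace ℝ F] (v : SpT n)
    (G : SpT n → F) (p : SpT n) : F := fderiv ℝ G p v

/-- Spatial unit direction. -/
def eS {n : ℕ} (i : Fin n) : SpT n := (0, EuclideanSpace.single i 1)

/-- Time direction. -/
def eT {n : ℕ} : SpT n := (1, 0)

section stcalc
variable {n : ℕ} {F : Type*} [NormedAddCommGroup F] [NormedSpace ℝ F]

lemma DD_smooth {G : SpT n → F} (hG : ContDiff ℝ (⊤ : ℕ∞) G) (v : SpT n) :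
    ContDiff ℝ (⊤ : ℕ∞) (DD v G) := by
  unfold DD
  exact (hG.fderiv_right (m := ((⊤ : ℕ∞) : WithTop ℕ∞)) (by simp)).clm_apply contDiff_const

lemma DD_comm {G : SpT n → F} (hG : ContDiff ℝ (⊤ : ℕ∞) G) (v w : SpT n) :
    DD v (DD w G) = DD w (DD v G) := by
  have h1 : ContDiff ℝ (⊤ : ℕ∞) (fderiv ℝ G) := hG.fderiv_right (by simp)
  have key : ∀ v w p, DD v (DD w G) p = fderiv ℝ (fderiv ℝ G) p v w := by
    intro v w p
    have := ((h1.differentiable (by simp)).differentiableAt (x := p)).hasFDerivAt.clm_apply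
      (hasFDerivAt_const w p)
    unfold DD
    rw [this.fderiv]
    simp
  ext p
  rw [key, key]
  exact (hG.contDiffAt.isSymmSndFDerivAt (by simpa using WithTop.coe_le_coe.2 (le_top : (2 : ℕ∞) ≤ ⊤))) v w

lemma DD_L {F' : Type*} [NormedAddCommGroup F'] [NormedSpace ℝ F'] (L : F →L[ℝ] F')
    {G : SpT n → F} (hG : ContDiff ℝ (⊤ : ℕ∞) G) (v : SpT n) :
    DD v (fun p => L (G p)) = fun p => L (DD v G p) := by
  ext p
  have := L.hasFDerivAt.comp p ((hG.differentiable (by simp)).differentiableAt (x := p)).hasFDerivAt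
  unfold DD
  have h2 := this.fderiv
  simp only [Function.comp_def] at h2
  rw [h2]; simp

lemma DD_time {G : SpT n → F} (hG : ContDiff ℝ (⊤ : ℕ∞) G) (s : ℝ)
    (x : EuclideanSpace ℝ (Fin n)) :
    HasDerivAt (fun r => G (r, x)) (DD eT G (s, x)) s := by
  have h1 := ((hG.differentiable (by simp)).differentiableAt (x := (s, x))).hasFDerivAt
  have h2 : HasDerivAt (fun r : ℝ => ((r, x) : SpT n)) (1, 0) s :=
    (hasDerivAt_id s).prodMk (hasDerivAt_const s x)
  exact h1.comp_hasDerivAt s h2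

lemma DD_space {G : SpT n → F} (hG : ContDiff ℝ (⊤ : ℕ∞) G) (t : ℝ)
    (x : EuclideanSpace ℝ (Fin n)) (i : Fin n) :
    HasDerivAt (fun r : ℝ => G (t, x + r • EuclideanSpace.single i 1)) (DD (eS i) G (t, x)) 0 := by
  have h1 := ((hG.differentiable (by simp)).differentiableAt
    (x := (t, x + (0:ℝ) • EuclideanSpace.single i (1:ℝ)))).hasFDerivAt
  have h2 : HasDerivAt (fun r : ℝ => ((t, x + r • EuclideanSpace.single i (1:ℝ)) : SpT n))
      (0, EuclideanSpace.single i 1) 0 := by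
    refine (hasDerivAt_const _ t).prodMk ?_
    simpa using ((hasDerivAt_id (0:ℝ)).smul_const (EuclideanSpace.single i (1:ℝ))).const_add x
  have := h1.comp_hasDerivAt 0 h2
  simpa [DD, eS, Function.comp_def] using this

lemma DD_fderiv {G : SpT n → F} (hG : ContDiff ℝ (⊤ : ℕ∞) G) (t : ℝ)
    (x v : EuclideanSpace ℝ (Fin n)) :
    fderiv ℝ (fun y => G (t, y)) x v = fderiv ℝ G (t, x) (0, v) := by
  have h1 := ((hG.differentiable (by simp)).differentiableAt (x := (t, x))).hasFDerivAt
  have h2 : HasFDerivAt (fun y => ((t, y) : SpT n)) (ContinuousLinearMap.inr ℝ ℝ _) x :=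
    hasFDerivAt_prodMk_right t x
  have := (h1.comp x h2).fderiv
  simp only [Function.comp_def] at this
  rw [this]; simp

end stcalc

/-! ### Decay classes -/

/-- Continuous with rapid decay in space, locally uniformly in time. -/
def Good {n : ℕ} (f : SpT n → ℝ) : Prop :=
  Continuous f ∧ ∀ (k : ℕ) (T : ℝ), ∃ C : ℝ, ∀ p : SpT n, |p.1| ≤ T →
    (1 + ‖p.2‖) ^ k * |f p| ≤ C

/-- Multipliers of `Good`. -/
def Mult {n : ℕ} (g : SpT n → ℝ) : Prop := ∀ f, Good f → Good (g * f)

section decay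
variable {n : ℕ} {f g : SpT n → ℝ}

lemma Good.mk' (hc : Continuous f) (h : ∀ (k : ℕ) (T : ℝ), ∃ C : ℝ, ∀ p : SpT n, |p.1| ≤ T →
    ‖p.2‖ ^ k * |f p| ≤ C) : Good f := by
  refine ⟨hc, fun k T => ?_⟩
  obtain ⟨C0, h0⟩ := h 0 T
  obtain ⟨C, hC⟩ := h k T
  refine ⟨2 ^ (k-1) * (C0 + C), fun p hp => ?_⟩
  have h0 := h0 p hp
  have hC := hC p hp
  have := add_pow_le (zero_le_one) (norm_nonneg p.2) k
  calc (1 + ‖p.2‖) ^ k * |f p| ≤ (2 ^ (k-1) * (1 ^ k + ‖p.2‖ ^ k)) * |f p| := by gcongr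
    _ = 2 ^ (k-1) * (‖p.2‖ ^ 0 * |f p| + ‖p.2‖ ^ k * |f p|) := by simp; ring
    _ ≤ _ := by gcongr

lemma Good.add (hf : Good f) (hg : Good g) : Good (f + g) := by
  refine ⟨hf.1.add hg.1, fun k T => ?_⟩
  obtain ⟨C, hC⟩ := hf.2 k T
  obtain ⟨C', hC'⟩ := hg.2 k T
  refine ⟨C + C', fun p hp => ?_⟩
  calc _ ≤ (1 + ‖p.2‖) ^ k * (|f p| + |g p|) := by
        gcongr; exact abs_add_le _ _
    _ ≤ _ := by rw [mul_add]; exact add_le_add (hC p hp) (hC' p hp)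

lemma Mult.mk' (hc : Continuous g) (m : ℕ) (h : ∀ (T : ℝ), ∃ C : ℝ, ∀ p : SpT n, |p.1| ≤ T →
    |g p| ≤ C * (1 + ‖p.2‖) ^ m) : Mult g := by
  refine fun f hf => ⟨hc.mul hf.1, fun k T => ?_⟩
  obtain ⟨C, hC⟩ := h T
  obtain ⟨C', hC'⟩ := hf.2 (k + m) T
  refine ⟨|C| * C', fun p hp => ?_⟩
  have h1 := hC p hp
  have h2 := hC' p hp
  calc (1 + ‖p.2‖) ^ k * |(g * f) p| = (1 + ‖p.2‖) ^ k * (|g p| * |f p|) := by simp [abs_mul]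
    _ ≤ (1 + ‖p.2‖) ^ k * ((|C| * (1 + ‖p.2‖) ^ m) * |f p|) := by
        gcongr
        exact h1.trans (by gcongr; exact le_abs_self C)
    _ = |C| * ((1 + ‖p.2‖) ^ (k + m) * |f p|) := by rw [pow_add]; ring
    _ ≤ _ := by gcongr

lemma Good.mult (hf : Good f) : Mult f := by
  refine Mult.mk' hf.1 0 fun T => ?_
  obtain ⟨C, hC⟩ := hf.2 0 T
  exact ⟨C, fun p hp => by simpa using hC p hp⟩

lemma Mult.const (c : ℝ) : Mult (fun _ : SpT n => c) :=
  Mult.mk' continuous_const 0 fun _ => ⟨|c|, fun _ _ => by simp⟩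

lemma Mult.time : Mult (fun p : SpT n => p.1) :=
  Mult.mk' continuous_fst 0 fun T => ⟨T, fun _ h => by simpa using h⟩

lemma Mult.coord (i : Fin n) : Mult (fun p : SpT n => p.2 i) :=
  Mult.mk' (by fun_prop) 1 fun T => ⟨1, fun p _ => by
    have := PiLp.norm_apply_le p.2 i
    rw [Real.norm_eq_abs] at this
    simp; linarith⟩

lemma Mult.bdd (hc : Continuous g) (C : ℝ) (h : ∀ p, |g p| ≤ C) : Mult g :=
  Mult.mk' hc 0 fun _ => ⟨C, fun p _ => by simpa using h p⟩

lemma Good.mul_left (hg : Mult g) (hf : Good f) : Good (g * f) := hg f hf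
lemma Good.mul_right (hf : Good f) (hg : Mult g) : Good (f * g) := mul_comm g f ▸ hg f hf
lemma Mult.mul (hf : Mult f) (hg : Mult g) : Mult (f * g) := fun h hh => by
  rw [mul_assoc]; exact hf _ (hg _ hh)
lemma Mult.add (hf : Mult f) (hg : Mult g) : Mult (f + g) := fun h hh => by
  rw [add_mul]; exact (hf _ hh).add (hg _ hh)
lemma Good.zero : Good (0 : SpT n → ℝ) := ⟨continuous_const, fun k T => ⟨0, by simp⟩⟩
lemma Good.neg (hf : Good f) : Good (-f) := by
  have := Mult.const (-1) f hf
  convert this using 1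
  ext p; simp
lemma Mult.neg (hf : Mult f) : Mult (-f) := fun h hh => by
  rw [neg_mul]; exact (hf _ hh).neg
lemma Good.sub (hf : Good f) (hg : Good g) : Good (f - g) := sub_eq_add_neg f g ▸ hf.add hg.neg
lemma Mult.sub (hf : Mult f) (hg : Mult g) : Mult (f - g) := sub_eq_add_neg f g ▸ hf.add hg.neg
lemma Good.sum {ι : Type*} (s : Finset ι) {f : ι → SpT n → ℝ} (h : ∀ i, Good (f i)) :
    Good (∑ i ∈ s, f i) :=
  Finset.sum_induction _ _ (fun _ _ => Good.add) Good.zero (fun i _ => h i)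
lemma Mult.sum {ι : Type*} (s : Finset ι) {f : ι → SpT n → ℝ} (h : ∀ i, Mult (f i)) :
    Mult (∑ i ∈ s, f i) :=
  Finset.sum_induction _ _ (fun _ _ => Mult.add) Good.zero.mult (fun i _ => h i)

lemma Good.bound (hf : Good f) (T : ℝ) : ∃ B : EuclideanSpace ℝ (Fin n) → ℝ, Integrable B ∧
    ∀ t x, |t| ≤ T → ‖f (t, x)‖ ≤ B x := by
  obtain ⟨C, hC⟩ := hf.2 (n + 1) T
  refine ⟨fun x => C * (1 + ‖x‖) ^ (-((n:ℝ) + 1)),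
    (integrable_one_add_norm (by simp)).const_mul C, fun t x ht => ?_⟩
  have := hC (t, x) ht
  have hp : 0 < 1 + ‖x‖ := by positivity
  beta_reduce
  rw [Real.rpow_neg hp.le, ← div_eq_mul_inv, le_div_iff₀ (by positivity), Real.norm_eq_abs]
  have h2 : (1 + ‖x‖) ^ ((n:ℝ) + 1) = (1 + ‖x‖) ^ (n + 1) := by
    rw [← Real.rpow_natCast]; simp
  rw [h2, mul_comm]; exact this

lemma Good.cont_slice (hf : Good f) (t : ℝ) : Continuous (fun x => f (t, x)) :=
  hf.1.comp (by fun_prop)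

lemma Good.integrable (hf : Good f) (t : ℝ) : Integrable (fun x => f (t, x)) := by
  obtain ⟨B, hB, h⟩ := hf.bound |t|
  exact hB.mono' (hf.cont_slice t).aestronglyMeasurable (Filter.Eventually.of_forall fun x => h t x le_rfl)

lemma Good.hasDerivAt_integral {f' : SpT n → ℝ} (hf : Good f) (hf' : Good f')
    (h : ∀ s x, HasDerivAt (fun r => f (r, x)) (f' (s, x)) s) (t : ℝ) :
    HasDerivAt (fun s => ∫ x, f (s, x)) (∫ x, f' (t, x)) t := by
  obtain ⟨B, hB, hb⟩ := hf'.bound (|t| + 1)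
  refine (hasDerivAt_integral_of_dominated_loc_of_deriv_le (μ := volume)
    (F := fun s x => f (s, x)) (F' := fun s x => f' (s, x)) (bound := B)
    (Metric.ball_mem_nhds t one_pos) (Filter.Eventually.of_forall fun s => (hf.cont_slice s).aestronglyMeasurable)
    (hf.integrable t) (hf'.cont_slice t).aestronglyMeasurable
    (Filter.Eventually.of_forall fun x s hs => hb s x ?_) hB
    (Filter.Eventually.of_forall fun x s _ => h s x)).2
  rw [Metric.mem_ball, Real.dist_eq] at hs
  have := abs_sub_abs_le_abs_sub s t
  linarith

lemma Good.integral_div {f' : SpT n → ℝ} (hf : Good f) (hf' : Good f') (t : ℝ) (i : Fin n)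
    (h : ∀ x, HasDerivAt (fun r : ℝ => f (t, x + r • EuclideanSpace.single i 1)) (f' (t, x)) 0) :
    ∫ x, f' (t, x) = 0 := by
  have := integral_bilinear_hasLineDerivAt_right_eq_neg_left_of_integrable
    (μ := (volume : Measure (EuclideanSpace ℝ (Fin n))))
    (f := fun _ => (1:ℝ)) (f' := fun _ => 0) (g := fun x => f (t, x)) (g' := fun x => f' (t, x))
    (v := EuclideanSpace.single i 1) (B := ContinuousLinearMap.mul ℝ ℝ)
    (by simp) (by simpa using hf'.integrable t) (by simpa using hf.integrable t)
    (fun x _ => hasDerivAt_const _ _) (fun x _ => h x)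
  simpa using this

lemma Good.of_LUS {φ : ℝ → EuclideanSpace ℝ (Fin n) → ℂ} (h : LocUnifSchwartz φ)
    (hs : ContDiff ℝ (⊤ : ℕ∞) (fun p : SpT n => φ p.1 p.2)) (L : ℂ →L[ℝ] ℝ) (hL : ∀ z, |L z| ≤ ‖z‖) :
    Good (fun p => L (φ p.1 p.2)) ∧ (∀ i, Good (DD (eS i) (fun p => L (φ p.1 p.2)))) ∧
    ∀ i j, Good (DD (eS i) (DD (eS j) (fun p => L (φ p.1 p.2)))) := by
  have hLs : ContDiff ℝ (⊤ : ℕ∞) (fun p : SpT n => L (φ p.1 p.2)) := L.contDiff.comp hs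
  refine ⟨Good.mk' hLs.continuous fun k T => ?_,
    fun i => Good.mk' (DD_smooth hLs _).continuous fun k T => ?_,
    fun i j => Good.mk' (DD_smooth (DD_smooth hLs _) _).continuous fun k T => ?_⟩
  · obtain ⟨C, hC⟩ := h k 0 T
    refine ⟨C, fun p hp => le_trans ?_ (hC p.1 (abs_le.1 hp) p.2)⟩
    gcongr
    simpa using hL _
  · obtain ⟨C, hC⟩ := h k 1 T
    refine ⟨C, fun p hp => le_trans ?_ (hC p.1 (abs_le.1 hp) p.2)⟩
    gcongr
    rw [DD_L L hs]
    refine (hL _).trans ?_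
    have e1 := DD_fderiv hs p.1 p.2 (EuclideanSpace.single i 1)
    have e2 := (iteratedFDeriv ℝ 1 (φ p.1) p.2).le_opNorm (fun _ => EuclideanSpace.single i 1)
    rw [iteratedFDeriv_one_apply] at e2
    simp only [] at e1
    unfold DD eS
    rw [← e1]
    simpa using e2
  · obtain ⟨C, hC⟩ := h k 2 T
    refine ⟨C, fun p hp => le_trans ?_ (hC p.1 (abs_le.1 hp) p.2)⟩
    gcongr
    rw [DD_L L hs, DD_L L (DD_smooth hs _)]
    refine (hL _).trans ?_
    have e1 := DD_fderiv (DD_smooth hs (eS j)) p.1 p.2 (EuclideanSpace.single i 1)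
    have e2 := (iteratedFDeriv ℝ 2 (φ p.1) p.2).le_opNorm
      ![EuclideanSpace.single i 1, EuclideanSpace.single j 1]
    rw [iteratedFDeriv_two_apply] at e2
    have e3 : (fun y => DD (eS j) (fun p : SpT n => φ p.1 p.2) (p.1, y))
        = fun y => fderiv ℝ (φ p.1) y (EuclideanSpace.single j 1) := by
      ext y
      exact (DD_fderiv hs p.1 y (EuclideanSpace.single j 1)).symm
    have hsl : ContDiff ℝ (⊤ : ℕ∞) (φ p.1) :=
      hs.comp (contDiff_const.prodMk contDiff_id)
    have hd : DifferentiableAt ℝ (fderiv ℝ (φ p.1)) p.2 :=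
      ((hsl.fderiv_right (m := ((⊤ : ℕ∞) : WithTop ℕ∞)) (by simp)).differentiable
        (by simp)).differentiableAt
    have e4 := (hd.hasFDerivAt.clm_apply
      (hasFDerivAt_const (EuclideanSpace.single j (1:ℝ)) p.2)).fderiv
    rw [e3, e4] at e1
    change ‖fderiv ℝ (DD (eS j) (fun p : SpT n => φ p.1 p.2)) (p.1, p.2)
      (0, EuclideanSpace.single i 1)‖ ≤ _
    rw [← e1]
    simpa using e2

end decay

/-! ### The real form of the identity -/

/-- coordinate function -/
def xc {n : ℕ} (i : Fin n) : SpT n → ℝ := fun p => p.2 i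
/-- time function -/
def tm {n : ℕ} : SpT n → ℝ := fun p => p.1
/-- constant function -/
def kc {n : ℕ} (c : ℝ) : SpT n → ℝ := fun _ => c

section core
variable {n : ℕ}

lemma Mult.xc (i : Fin n) : Mult (xc i) := Mult.coord i
lemma Mult.tm : Mult (tm (n := n)) := Mult.time
lemma Mult.kc (c : ℝ) : Mult (kc (n := n) c) := Mult.const c

/-- first component of the conformal vector -/
def Aj (a b : SpT n → ℝ) (i : Fin n) : SpT n → ℝ := xc i * a - kc 2 * tm * DD (eS i) b
/-- its time derivative -/
def Aj' (a b : SpT n → ℝ) (i : Fin n) : SpT n → ℝ :=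
  xc i * DD eT a - kc 2 * DD (eS i) b - kc 2 * tm * DD (eS i) (DD eT b)
/-- second component of the conformal vector -/
def Bj (a b : SpT n → ℝ) (i : Fin n) : SpT n → ℝ := xc i * b + kc 2 * tm * DD (eS i) a
/-- its time derivative -/
def Bj' (a b : SpT n → ℝ) (i : Fin n) : SpT n → ℝ :=
  xc i * DD eT b + kc 2 * DD (eS i) a + kc 2 * tm * DD (eS i) (DD eT a)
/-- conformal density -/
def Fd (a b : SpT n → ℝ) : SpT n → ℝ := ∑ i, (Aj a b i * Aj a b i + Bj a b i * Bj a b i)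
/-- its time derivative -/
def Fd' (a b : SpT n → ℝ) : SpT n → ℝ :=
  ∑ i, kc 2 * (Aj a b i * Aj' a b i + Bj a b i * Bj' a b i)
/-- mass density -/
def rh (a b : SpT n → ℝ) : SpT n → ℝ := a * a + b * b
/-- potential energy density, time derivative -/
def Gd' (U a b : SpT n → ℝ) : SpT n → ℝ :=
  DD eT U * rh a b + U * (kc 2 * (a * DD eT a + b * DD eT b))
/-- `x · ∇U` -/
def xU (U : SpT n → ℝ) : SpT n → ℝ := ∑ i, xc i * DD (eS i) U
/-- gradient square -/
def eg (a b : SpT n → ℝ) : SpT n → ℝ :=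
  ∑ k, (DD (eS k) a * DD (eS k) a + DD (eS k) b * DD (eS k) b)
/-- `|x|²` -/
def X2 : SpT n → ℝ := ∑ k, xc k * xc k

/-- flux -/
def Pf (c t : ℝ) (U a b : SpT n → ℝ) (i : Fin n) : SpT n → ℝ :=
  kc (-2 * c) * (X2 * (a * DD (eS i) b - b * DD (eS i) a))
  + kc (8 * t) * (DD eT a * DD (eS i) a + DD eT b * DD (eS i) b)
  - kc 4 * (kc (-2) * (DD (eS i) a * xU a + DD (eS i) b * xU b)
      + xc i * (eg a b + U * rh a b + (a * DD eT b - b * DD eT a))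
      - kc n * (a * DD (eS i) a + b * DD (eS i) b))

/-- derivative of `eg` -/
def eg' (a b : SpT n → ℝ) (i : Fin n) : SpT n → ℝ :=
  ∑ k, kc 2 * (DD (eS k) a * DD (eS i) (DD (eS k) a) + DD (eS k) b * DD (eS i) (DD (eS k) b))
/-- derivative of `xU` -/
def xU' (a : SpT n → ℝ) (i : Fin n) : SpT n → ℝ :=
  DD (eS i) a + ∑ k, xc k * DD (eS i) (DD (eS k) a)

/-- divergence of flux -/
def Pf' (c t : ℝ) (U a b : SpT n → ℝ) (i : Fin n) : SpT n → ℝ :=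
  kc (-2 * c) * (kc 2 * xc i * (a * DD (eS i) b - b * DD (eS i) a)
      + X2 * (a * DD (eS i) (DD (eS i) b) - b * DD (eS i) (DD (eS i) a)))
  + kc (8 * t) * (DD (eS i) (DD eT a) * DD (eS i) a + DD (eS i) (DD eT b) * DD (eS i) b
      + (DD eT a * DD (eS i) (DD (eS i) a) + DD eT b * DD (eS i) (DD (eS i) b)))
  - kc 4 * (kc (-2) * (DD (eS i) (DD (eS i) a) * xU a + DD (eS i) a * xU' a i
        + (DD (eS i) (DD (eS i) b) * xU b + DD (eS i) b * xU' b i))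
      + (eg a b + U * rh a b + (a * DD eT b - b * DD eT a))
      + xc i * (eg' a b i + (DD (eS i) U * rh a b
            + U * (kc 2 * (a * DD (eS i) a + b * DD (eS i) b)))
          + (DD (eS i) a * DD eT b + a * DD (eS i) (DD eT b)
            - (DD (eS i) b * DD eT a + b * DD (eS i) (DD eT a))))
      - kc n * (DD (eS i) a * DD (eS i) a + a * DD (eS i) (DD (eS i) a)
          + (DD (eS i) b * DD (eS i) b + b * DD (eS i) (DD (eS i) b))))

lemma hasDerivAt_coord (x : EuclideanSpace ℝ (Fin n)) (i k : Fin n) :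
    HasDerivAt (fun r : ℝ => (x + r • EuclideanSpace.single i (1:ℝ)) k)
      (if k = i then 1 else 0) 0 := by
  have : (fun r : ℝ => (x + r • EuclideanSpace.single i (1:ℝ)) k)
      = fun r => x k + r * (if k = i then 1 else 0) := by
    ext r; simp
  rw [this]
  simpa using ((hasDerivAt_id (0:ℝ)).mul_const (if k = i then (1:ℝ) else 0)).const_add (x k)

/-- All the decay assumptions for one real component. -/
structure Comp (a : SpT n → ℝ) : Prop where
  sm : ContDiff ℝ (⊤ : ℕ∞) a
  g0 : Good a
  g1 : ∀ i, Good (DD (eS i) a)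
  g2 : ∀ i j, Good (DD (eS i) (DD (eS j) a))
  gt : Good (DD eT a)
  gt1 : ∀ i, Good (DD (eS i) (DD eT a))

/-- All assumptions for the potential. -/
structure Pot (U : SpT n → ℝ) : Prop where
  sm : ContDiff ℝ (⊤ : ℕ∞) U
  m0 : Mult U
  m1 : ∀ i, Mult (DD (eS i) U)
  mt : Mult (DD eT U)

variable {a b U : SpT n → ℝ}

lemma good_rh (ha : Comp a) (hb : Comp b) : Good (rh a b) :=
  (ha.g0.mul_right ha.g0.mult).add (hb.g0.mul_right hb.g0.mult)

lemma good_Aj (ha : Comp a) (hb : Comp b) (i : Fin n) : Good (Aj a b i) :=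
  (Good.mul_left (.xc i) ha.g0).sub (Good.mul_left ((Mult.kc 2).mul .tm) (hb.g1 i))

lemma good_Bj (ha : Comp a) (hb : Comp b) (i : Fin n) : Good (Bj a b i) :=
  (Good.mul_left (.xc i) hb.g0).add (Good.mul_left ((Mult.kc 2).mul .tm) (ha.g1 i))

lemma good_Aj' (ha : Comp a) (hb : Comp b) (i : Fin n) : Good (Aj' a b i) :=
  ((Good.mul_left (.xc i) ha.gt).sub (Good.mul_left (.kc 2) (hb.g1 i))).sub
    (Good.mul_left ((Mult.kc 2).mul .tm) (hb.gt1 i))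

lemma good_Bj' (ha : Comp a) (hb : Comp b) (i : Fin n) : Good (Bj' a b i) :=
  ((Good.mul_left (.xc i) hb.gt).add (Good.mul_left (.kc 2) (ha.g1 i))).add
    (Good.mul_left ((Mult.kc 2).mul .tm) (ha.gt1 i))

lemma good_Fd (ha : Comp a) (hb : Comp b) : Good (Fd a b) :=
  Good.sum _ fun i => ((good_Aj ha hb i).mul_right (good_Aj ha hb i).mult).add
    ((good_Bj ha hb i).mul_right (good_Bj ha hb i).mult)

lemma good_Fd' (ha : Comp a) (hb : Comp b) : Good (Fd' a b) :=
  Good.sum _ fun i => Good.mul_left (.kc 2)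
    (((good_Aj ha hb i).mul_right (good_Aj' ha hb i).mult).add
    ((good_Bj ha hb i).mul_right (good_Bj' ha hb i).mult))

lemma good_Gd' (hU : Pot U) (ha : Comp a) (hb : Comp b) : Good (Gd' U a b) :=
  (Good.mul_left hU.mt (good_rh ha hb)).add (Good.mul_left hU.m0 (Good.mul_left (.kc 2)
    ((ha.g0.mul_right ha.gt.mult).add (hb.g0.mul_right hb.gt.mult))))

lemma good_eg (ha : Comp a) (hb : Comp b) : Good (eg a b) :=
  Good.sum _ fun i => ((ha.g1 i).mul_right (ha.g1 i).mult).add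
    ((hb.g1 i).mul_right (hb.g1 i).mult)

lemma good_eg' (ha : Comp a) (hb : Comp b) (i : Fin n) : Good (eg' a b i) :=
  Good.sum _ fun k => Good.mul_left (.kc 2) (((ha.g1 k).mul_right (ha.g2 i k).mult).add
    ((hb.g1 k).mul_right (hb.g2 i k).mult))

lemma good_xU (ha : Comp a) : Good (xU a) := Good.sum _ fun i => Good.mul_left (.xc i) (ha.g1 i)
lemma mult_xU (hU : Pot U) : Mult (xU U) := Mult.sum _ fun i => (Mult.xc i).mul (hU.m1 i)
lemma good_xU' (ha : Comp a) (i : Fin n) : Good (xU' a i) :=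
  (ha.g1 i).add (Good.sum _ fun k => Good.mul_left (.xc k) (ha.g2 i k))
lemma mult_X2 : Mult (X2 (n := n)) := Mult.sum _ fun i => (Mult.xc i).mul (.xc i)

lemma good_Pf (c t : ℝ) (hU : Pot U) (ha : Comp a) (hb : Comp b) (i : Fin n) :
    Good (Pf c t U a b i) := by
  have hg1 := ha.g1 i
  have hg1' := hb.g1 i
  refine Good.sub (Good.add (Good.mul_left (.kc _) (Good.mul_left mult_X2
    ((ha.g0.mul_right hg1'.mult).sub (hb.g0.mul_right hg1.mult)))) (Good.mul_left (.kc _)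
    ((ha.gt.mul_right hg1.mult).add (hb.gt.mul_right hg1'.mult)))) (Good.mul_left (.kc _)
    (Good.sub (Good.add (Good.mul_left (.kc _) ((hg1.mul_right (good_xU ha).mult).add
      (hg1'.mul_right (good_xU hb).mult))) (Good.mul_left (.xc i)
      (((good_eg ha hb).add (Good.mul_left hU.m0 (good_rh ha hb))).add
        ((ha.g0.mul_right hb.gt.mult).sub (hb.g0.mul_right ha.gt.mult)))))
      (Good.mul_left (.kc _) ((ha.g0.mul_right hg1.mult).add (hb.g0.mul_right hg1'.mult)))))

lemma good_Pf' (c t : ℝ) (hU : Pot U) (ha : Comp a) (hb : Comp b) (i : Fin n) :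
    Good (Pf' c t U a b i) := by
  have a0 := ha.g0
  have b0 := hb.g0
  have a1 := ha.g1 i
  have b1 := hb.g1 i
  have a2 := ha.g2 i i
  have b2 := hb.g2 i i
  have at0 := ha.gt
  have bt0 := hb.gt
  have at1 := ha.gt1 i
  have bt1 := hb.gt1 i
  refine Good.sub (Good.add (Good.mul_left (.kc _) (Good.add
      (Good.mul_left ((Mult.kc _).mul (.xc i)) ((a0.mul_right b1.mult).sub (b0.mul_right a1.mult)))
      (Good.mul_left mult_X2 ((a0.mul_right b2.mult).sub (b0.mul_right a2.mult)))))
    (Good.mul_left (.kc _) (((at1.mul_right a1.mult).add (bt1.mul_right b1.mult)).add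
      ((at0.mul_right a2.mult).add (bt0.mul_right b2.mult)))))
    (Good.mul_left (.kc _) (Good.sub (Good.add (Good.add
      (Good.mul_left (.kc _) (Good.add
        ((a2.mul_right (good_xU ha).mult).add (a1.mul_right (good_xU' ha i).mult))
        ((b2.mul_right (good_xU hb).mult).add (b1.mul_right (good_xU' hb i).mult))))
      (((good_eg ha hb).add (Good.mul_left hU.m0 (good_rh ha hb))).add
        ((a0.mul_right bt0.mult).sub (b0.mul_right at0.mult))))
      (Good.mul_left (.xc i) (((good_eg' ha hb i).add
        ((Good.mul_left (hU.m1 i) (good_rh ha hb)).add (Good.mul_left hU.m0 (Good.mul_left (.kc _)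
          ((a0.mul_right a1.mult).add (b0.mul_right b1.mult)))))).add
        (((a1.mul_right bt0.mult).add (a0.mul_right bt1.mult)).sub
          ((b1.mul_right at0.mult).add (b0.mul_right at1.mult))))))
      (Good.mul_left (.kc _) (((a1.mul_right a1.mult).add (a0.mul_right a2.mult)).add
        ((b1.mul_right b1.mult).add (b0.mul_right b2.mult))))))

lemma deriv_Fd (ha : Comp a) (hb : Comp b) (s : ℝ) (x : EuclideanSpace ℝ (Fin n)) :
    HasDerivAt (fun r => Fd a b (r, x)) (Fd' a b (s, x)) s := by
  simp only [Fd, Fd', Finset.sum_apply]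
  refine HasDerivAt.fun_sum fun i _ => ?_
  have e1 : HasDerivAt (fun r => Aj a b i (r, x)) (Aj' a b i (s, x)) s := by
    have h1 := (DD_time ha.sm s x).const_mul (x i)
    have h2 := ((hasDerivAt_id s).const_mul 2).fun_mul (DD_time (DD_smooth hb.sm (eS i)) s x)
    refine HasDerivAt.congr_deriv (h1.fun_sub h2) ?_
    simp [Aj', xc, kc, tm, DD_comm hb.sm eT (eS i)]; ring
  have e2 : HasDerivAt (fun r => Bj a b i (r, x)) (Bj' a b i (s, x)) s := by
    have h1 := (DD_time hb.sm s x).const_mul (x i)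
    have h2 := ((hasDerivAt_id s).const_mul 2).fun_mul (DD_time (DD_smooth ha.sm (eS i)) s x)
    refine HasDerivAt.congr_deriv (h1.fun_add h2) ?_
    simp [Bj', xc, kc, tm, DD_comm ha.sm eT (eS i)]; ring
  refine HasDerivAt.congr_deriv ((e1.fun_mul e1).fun_add (e2.fun_mul e2)) ?_
  simp [kc]; ring

lemma deriv_Gd (hU : Pot U) (ha : Comp a) (hb : Comp b) (s : ℝ) (x : EuclideanSpace ℝ (Fin n)) :
    HasDerivAt (fun r => (U * rh a b) (r, x)) (Gd' U a b (s, x)) s := by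
  have e1 := DD_time ha.sm s x
  have e2 := DD_time hb.sm s x
  refine HasDerivAt.congr_deriv ((DD_time hU.sm s x).fun_mul ((e1.fun_mul e1).fun_add (e2.fun_mul e2))) ?_
  simp only [kc, Gd', rh, Pi.mul_apply, Pi.add_apply]; ring

lemma deriv_Pf (c t : ℝ) (hU : Pot U) (ha : Comp a) (hb : Comp b) (i : Fin n)
    (x : EuclideanSpace ℝ (Fin n)) :
    HasDerivAt (fun r : ℝ => Pf c t U a b i (t, x + r • EuclideanSpace.single i 1))
      (Pf' c t U a b i (t, x)) 0 := by
  have A0 := DD_space ha.sm t x i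
  have B0 := DD_space hb.sm t x i
  have U0 := DD_space hU.sm t x i
  have A1 := fun k => DD_space (DD_smooth ha.sm (eS k)) t x i
  have B1 := fun k => DD_space (DD_smooth hb.sm (eS k)) t x i
  have At := DD_space (DD_smooth ha.sm eT) t x i
  have Bt := DD_space (DD_smooth hb.sm eT) t x i
  have hx := hasDerivAt_coord x i
  have hX2 : HasDerivAt (fun r : ℝ => X2 (t, x + r • EuclideanSpace.single i (1:ℝ)))
      (2 * x i) 0 := by
    simp only [X2, Finset.sum_apply]
    refine HasDerivAt.congr_deriv (HasDerivAt.fun_sum (u := Finset.univ) fun k _ => (hx k).fun_mul (hx k)) ?_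
    simp [xc, Finset.sum_add_distrib]; ring
  have hxU : ∀ g : SpT n → ℝ, ContDiff ℝ (⊤ : ℕ∞) g →
      HasDerivAt (fun r : ℝ => xU g (t, x + r • EuclideanSpace.single i (1:ℝ)))
      (xU' g i (t, x)) 0 := by
    intro g hg
    simp only [xU, Finset.sum_apply]
    refine HasDerivAt.congr_deriv (HasDerivAt.fun_sum (u := Finset.univ) fun k _ => (hx k).fun_mul
      (DD_space (DD_smooth hg (eS k)) t x i)) ?_
    simp [xU', xc, Finset.sum_add_distrib]
  have heg : HasDerivAt (fun r : ℝ => eg a b (t, x + r • EuclideanSpace.single i (1:ℝ)))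
      (eg' a b i (t, x)) 0 := by
    simp only [eg, Finset.sum_apply]
    refine HasDerivAt.congr_deriv (HasDerivAt.fun_sum (u := Finset.univ) fun k _ =>
      ((A1 k).fun_mul (A1 k)).fun_add ((B1 k).fun_mul (B1 k))) ?_
    simp only [eg', Finset.sum_apply]
    refine Finset.sum_congr rfl fun k _ => ?_
    simp [kc]; ring
  have hxi := hx i
  simp only [if_true] at hxi
  have hrh := (A0.fun_mul A0).fun_add (B0.fun_mul B0)
  have T1 := (hX2.fun_mul ((A0.fun_mul (B1 i)).fun_sub (B0.fun_mul (A1 i)))).const_mul (-2 * c)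
  have T2 := ((At.fun_mul (A1 i)).fun_add (Bt.fun_mul (B1 i))).const_mul (8 * t)
  have T3 := (((A1 i).fun_mul (hxU a ha.sm)).fun_add ((B1 i).fun_mul (hxU b hb.sm))).const_mul (-2)
  have T4 := hxi.fun_mul ((heg.fun_add (U0.fun_mul hrh)).fun_add
    ((A0.fun_mul Bt).fun_sub (B0.fun_mul At)))
  have T5 := ((A0.fun_mul (A1 i)).fun_add (B0.fun_mul (B1 i))).const_mul (n:ℝ)
  refine HasDerivAt.congr_deriv ((T1.fun_add T2).fun_sub (((T3.fun_add T4).fun_sub T5).const_mul 4)) ?_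
  simp [Pf', kc, xc, rh]; ring

lemma sumR {x A B u At Bt : Fin n → ℝ} (da db p q r s : Fin n → ℝ)
    (a b U at' bt' c t X2' xA xB e1 e2 : ℝ) :
    (∑ i, (-2 * c * (2 * x i * (a * B i - b * A i)
          + X2' * (a * db i - b * da i))
      + 8 * t * (At i * A i + Bt i * B i + (at' * da i + bt' * db i))
      - 4 * (-2 * (da i * xA + A i * (A i + p i)
            + (db i * xB + B i * (B i + q i)))
          + (e1 + e2 + U * (a * a + b * b) + (a * bt' - b * at'))
          + x i * ((2 * r i + 2 * s i) + (u i * (a * a + b * b)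
              + U * (2 * (a * A i + b * B i)))
            + (A i * bt' + a * Bt i - (B i * at' + b * At i)))
          - n * (A i * A i + a * da i + (B i * B i + b * db i)))))
      = (-4 * c * a - 8 * U * b + 4 * at') * (∑ i, x i * B i)
        + (4 * c * b - 8 * U * a - 4 * bt') * (∑ i, x i * A i)
        + (2 * c * X2' * b + 8 * t * at' + 8 * xA + 4 * n * a) * (∑ i, da i)
        + (-2 * c * X2' * a + 8 * t * bt' + 8 * xB + 4 * n * b) * (∑ i, db i)
        + 8 * t * (∑ i, A i * At i) + 8 * t * (∑ i, B i * Bt i)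
        + (8 + 4 * n) * (∑ i, A i * A i) + (8 + 4 * n) * (∑ i, B i * B i)
        + 8 * (∑ i, A i * p i) + 8 * (∑ i, B i * q i)
        + (-8) * (∑ i, x i * r i) + (-8) * (∑ i, x i * s i)
        + (-4) * (n * (e1 + e2 + U * (a * a + b * b) + (a * bt' - b * at')))
        + (-4 * (a * a + b * b)) * (∑ i, x i * u i)
        + (-4 * a) * (∑ i, x i * Bt i) + (4 * b) * (∑ i, x i * At i) := by
  have hn : (n : ℝ) * (e1 + e2 + U * (a * a + b * b) + (a * bt' - b * at'))
      = ∑ _i : Fin n, (e1 + e2 + U * (a * a + b * b) + (a * bt' - b * at')) := by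
    rw [Finset.sum_const, Finset.card_univ, Fintype.card_fin, nsmul_eq_mul]
  rw [hn]
  simp only [Finset.mul_sum, ← Finset.sum_add_distrib]
  exact Finset.sum_congr rfl fun i _ => by ring

lemma alg_id {x A B u At Bt : Fin n → ℝ} {AA BB : Fin n → Fin n → ℝ}
    (hA : ∀ i k, AA i k = AA k i) (hB : ∀ i k, BB i k = BB k i) (a b U at' bt' ut c t : ℝ)
    (hc : c * t = 1) (h1 : ∑ i, AA i i = bt' + U * a) (h2 : ∑ i, BB i i = -at' + U * b) :
    c * (∑ i, 2 * ((x i * a - 2 * t * B i) * (x i * at' - 2 * B i - 2 * t * Bt i)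
        + (x i * b + 2 * t * A i) * (x i * bt' + 2 * A i + 2 * t * At i)))
      + 4 * t * (ut * (a * a + b * b) + U * (2 * (a * at' + b * bt')))
      - 4 * ((∑ i, x i * u i) * (a * a + b * b)) - 4 * t * (ut * (a * a + b * b))
    = ∑ i, (-2 * c * (2 * x i * (a * B i - b * A i)
          + (∑ k, x k * x k) * (a * BB i i - b * AA i i))
      + 8 * t * (At i * A i + Bt i * B i + (at' * AA i i + bt' * BB i i))
      - 4 * (-2 * (AA i i * (∑ k, x k * A k) + A i * (A i + ∑ k, x k * AA i k)
            + (BB i i * (∑ k, x k * B k) + B i * (B i + ∑ k, x k * BB i k)))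
          + ((∑ k, (A k * A k + B k * B k)) + U * (a * a + b * b) + (a * bt' - b * at'))
          + x i * ((∑ k, 2 * (A k * AA i k + B k * BB i k)) + (u i * (a * a + b * b)
              + U * (2 * (a * A i + b * B i)))
            + (A i * bt' + a * Bt i - (B i * at' + b * At i)))
          - n * (A i * A i + a * AA i i + (B i * B i + b * BB i i)))) := by
  have hD : ∀ (A : Fin n → ℝ) (AA : Fin n → Fin n → ℝ), (∀ i k, AA i k = AA k i) →
      ∑ i, A i * ∑ k, x k * AA i k = ∑ i, x i * ∑ k, A k * AA i k := by
    intro A AA hA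
    simp only [Finset.mul_sum]
    rw [Finset.sum_comm]
    refine Finset.sum_congr rfl fun i _ => Finset.sum_congr rfl fun k _ => ?_
    rw [hA k i]; ring
  have hDa := hD A AA hA
  have hDb := hD B BB hB
  have hE : ∀ i, ∑ k, 2 * (A k * AA i k + B k * BB i k)
      = 2 * (∑ k, A k * AA i k) + 2 * ∑ k, B k * BB i k := by
    intro i
    rw [← Finset.mul_sum, Finset.sum_add_distrib]; ring
  simp only [hE]
  have hee : ∑ k, (A k * A k + B k * B k) = (∑ k, A k * A k) + ∑ k, B k * B k :=
    Finset.sum_add_distrib ..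
  rw [hee]
  set X2' := ∑ k, x k * x k with hX2'
  set xA := ∑ k, x k * A k with hxA
  set xB := ∑ k, x k * B k with hxB
  set e1 := ∑ k, A k * A k with he1
  set e2 := ∑ k, B k * B k with he2
  have L : (∑ i, 2 * ((x i * a - 2 * t * B i) * (x i * at' - 2 * B i - 2 * t * Bt i)
        + (x i * b + 2 * t * A i) * (x i * bt' + 2 * A i + 2 * t * At i)))
      = 2 * (a * at' + b * bt') * X2' + (-4 * a - 4 * t * at') * xB + (4 * b + 4 * t * bt') * xA
        + 8 * t * e1 + 8 * t * e2 + (-4 * t * a) * (∑ i, x i * Bt i)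
        + (4 * t * b) * (∑ i, x i * At i) + 8 * t ^ 2 * (∑ i, A i * At i)
        + 8 * t ^ 2 * (∑ i, B i * Bt i) := by
    simp only [hX2', hxA, hxB, he1, he2, Finset.mul_sum, ← Finset.sum_add_distrib]
    exact Finset.sum_congr rfl fun i _ => by ring
  have R := sumR (x := x) (A := A) (B := B) (u := u) (At := At) (Bt := Bt) (fun i => AA i i)
    (fun i => BB i i) (fun i => ∑ k, x k * AA i k) (fun i => ∑ k, x k * BB i k)
    (fun i => ∑ k, A k * AA i k) (fun i => ∑ k, B k * BB i k) a b U at' bt' c t X2' xA xB e1 e2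
  rw [← hxA, ← hxB, ← he1, ← he2] at R
  rw [L, R, hDa, hDb, h1, h2]
  linear_combination (-4 * at' * xB + 4 * bt' * xA + 8 * e1 + 8 * e2 - 4 * a * (∑ i, x i * Bt i)
    + 4 * b * (∑ i, x i * At i) + 8 * t * (∑ i, A i * At i) + 8 * t * (∑ i, B i * Bt i)) * hc

lemma pointwise_id (c t : ℝ) (hc : c * t = 1) (U : SpT n → ℝ) (ha : Comp a) (hb : Comp b)
    (x : EuclideanSpace ℝ (Fin n))
    (h1 : ∑ i, DD (eS i) (DD (eS i) a) (t, x) = DD eT b (t, x) + U (t, x) * a (t, x))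
    (h2 : ∑ i, DD (eS i) (DD (eS i) b) (t, x) = -DD eT a (t, x) + U (t, x) * b (t, x)) :
    c * Fd' a b (t, x) + 4 * t * Gd' U a b (t, x) - 4 * (xU U * rh a b) (t, x)
      - 4 * t * (DD eT U * rh a b) (t, x) = ∑ i, Pf' c t U a b i (t, x) := by
  have := alg_id (x := fun i => x i) (A := fun i => DD (eS i) a (t, x))
    (B := fun i => DD (eS i) b (t, x)) (u := fun i => DD (eS i) U (t, x))
    (At := fun i => DD (eS i) (DD eT a) (t, x)) (Bt := fun i => DD (eS i) (DD eT b) (t, x))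
    (AA := fun i k => DD (eS i) (DD (eS k) a) (t, x))
    (BB := fun i k => DD (eS i) (DD (eS k) b) (t, x))
    (fun i k => by rw [DD_comm ha.sm]) (fun i k => by rw [DD_comm hb.sm])
    (a (t, x)) (b (t, x)) (U (t, x)) (DD eT a (t, x)) (DD eT b (t, x)) (DD eT U (t, x)) c t hc h1 h2
  simpa only [Fd', Gd', Pf', xU, xU', rh, eg, eg', X2, Aj, Bj, Aj', Bj', kc, xc, tm,
    Finset.sum_apply, Pi.mul_apply, Pi.add_apply, Pi.sub_apply] using this

theorem core_id (hU : Pot U) (ha : Comp a) (hb : Comp b)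
    (h1 : ∀ p, ∑ i, DD (eS i) (DD (eS i) a) p = DD eT b p + U p * a p)
    (h2 : ∀ p, ∑ i, DD (eS i) (DD (eS i) b) p = -DD eT a p + U p * b p) (t : ℝ) (ht : 0 < t) :
    HasDerivAt (fun s => (1 / s) * (∫ x, Fd a b (s, x)) + 4 * s * ∫ x, (U * rh a b) (s, x))
      (-(1 / t ^ 2) * (∫ x, Fd a b (t, x)) + 4 * (∫ x, (xU U * rh a b) (t, x))
        + 4 * (∫ x, (U * rh a b) (t, x)) + 4 * t * ∫ x, (DD eT U * rh a b) (t, x)) t := by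
  have gr := good_rh ha hb
  have gG := Good.mul_left hU.m0 gr
  have gx := Good.mul_left (mult_xU hU) gr
  have gt := Good.mul_left hU.mt gr
  have gF' := good_Fd' ha hb
  have gG' := good_Gd' hU ha hb
  have dF := (good_Fd ha hb).hasDerivAt_integral gF' (deriv_Fd ha hb) t
  have dG := gG.hasDerivAt_integral gG' (deriv_Gd hU ha hb) t
  have d1 : HasDerivAt (fun s : ℝ => 1 / s) (-(1 / t ^ 2)) t := by
    simpa [one_div] using hasDerivAt_inv ht.ne'
  have key : (1 / t) * (∫ x, Fd' a b (t, x)) + 4 * t * (∫ x, Gd' U a b (t, x))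
      - 4 * (∫ x, (xU U * rh a b) (t, x)) - 4 * t * (∫ x, (DD eT U * rh a b) (t, x)) = 0 := by
    have I1 := (gF'.integrable t).const_mul (1 / t)
    have I2 := (gG'.integrable t).const_mul (4 * t)
    have I3 := (gx.integrable t).const_mul 4
    have I4 := (gt.integrable t).const_mul (4 * t)
    have I12 : Integrable (fun x => 1 / t * Fd' a b (t, x) + 4 * t * Gd' U a b (t, x)) := I1.add I2
    have I123 : Integrable (fun x => 1 / t * Fd' a b (t, x) + 4 * t * Gd' U a b (t, x)
      - 4 * (xU U * rh a b) (t, x)) := I12.sub I3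
    rw [← integral_const_mul, ← integral_const_mul, ← integral_const_mul, ← integral_const_mul,
      ← integral_add I1 I2, ← integral_sub I12 I3, ← integral_sub I123 I4]
    rw [integral_congr_ae (g := fun x => ∑ i, Pf' (1 / t) t U a b i (t, x))
      (Filter.Eventually.of_forall fun x =>
        pointwise_id (1 / t) t (by field_simp) U ha hb x (h1 _) (h2 _))]
    rw [integral_finsetSum _ fun i _ => (good_Pf' (1 / t) t hU ha hb i).integrable t]
    exact Finset.sum_eq_zero fun i _ => (good_Pf (1 / t) t hU ha hb i).integral_div
      (good_Pf' (1 / t) t hU ha hb i) t i (deriv_Pf (1 / t) t hU ha hb i)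
  refine HasDerivAt.congr_deriv
    ((d1.fun_mul dF).fun_add (((hasDerivAt_id t).const_mul 4).fun_mul dG)) ?_
  simp only [id]
  linear_combination key

end core

section final
variable {n : ℕ}

lemma mult_DD_of_bdd {G : SpT n → ℝ} (hG : ContDiff ℝ (⊤ : ℕ∞) G)
    (h : ∃ C : ℝ, ∀ p, ‖iteratedFDeriv ℝ 1 G p‖ ≤ C) (v : SpT n) : Mult (DD v G) := by
  obtain ⟨C, hC⟩ := h
  refine Mult.bdd (DD_smooth hG v).continuous (C * ‖v‖) fun p => ?_
  have h1 := (fderiv ℝ G p).le_opNorm v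
  have h2 := hC p
  rw [norm_iteratedFDeriv_one] at h2
  exact h1.trans (by gcongr)

lemma pot_W {W : ℝ → EuclideanSpace ℝ (Fin n) → ℝ}
    (hW : ContDiff ℝ (⊤ : ℕ∞) (fun p : SpT n => W p.1 p.2))
    (hWbd : ∀ m : ℕ, ∃ C : ℝ, ∀ p : SpT n,
      ‖iteratedFDeriv ℝ m (fun q : SpT n => W q.1 q.2) p‖ ≤ C) :
    Pot (fun p : SpT n => W p.1 p.2) := by
  refine ⟨hW, ?_, fun i => mult_DD_of_bdd hW (hWbd 1) _, mult_DD_of_bdd hW (hWbd 1) _⟩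
  obtain ⟨C, hC⟩ := hWbd 0
  exact Mult.bdd hW.continuous C fun p => by simpa using hC p

lemma DD_V {V : EuclideanSpace ℝ (Fin n) → ℝ} (hV : ContDiff ℝ (⊤ : ℕ∞) V) (v p : SpT n) :
    DD v (fun p : SpT n => V p.2) p = fderiv ℝ V p.2 v.2 := by
  have h1 := ((hV.differentiable (by simp)).differentiableAt (x := p.2)).hasFDerivAt
  have h2 : HasFDerivAt (fun p : SpT n => p.2) (ContinuousLinearMap.snd ℝ _ _) p := hasFDerivAt_snd
  have := (h1.comp p h2).fderiv
  simp only [Function.comp_def] at this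
  unfold DD
  rw [this]; simp

lemma pot_V {V : EuclideanSpace ℝ (Fin n) → ℝ} (hV : ContDiff ℝ (⊤ : ℕ∞) V)
    (hVbd : ∀ m : ℕ, ∃ C : ℝ, ∀ x, ‖iteratedFDeriv ℝ m V x‖ ≤ C) :
    Pot (fun p : SpT n => V p.2) := by
  have hs : ContDiff ℝ (⊤ : ℕ∞) (fun p : SpT n => V p.2) := hV.comp contDiff_snd
  have hD : ∀ v, Mult (DD v (fun p : SpT n => V p.2)) := by
    intro v
    obtain ⟨C, hC⟩ := hVbd 1
    refine Mult.bdd (DD_smooth hs v).continuous (C * ‖v.2‖) fun p => ?_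
    rw [DD_V hV]
    have h1 := (fderiv ℝ V p.2).le_opNorm v.2
    have h2 := hC p.2
    rw [norm_iteratedFDeriv_one] at h2
    exact h1.trans (by gcongr)
  refine ⟨hs, ?_, fun i => hD _, hD _⟩
  obtain ⟨C, hC⟩ := hVbd 0
  exact Mult.bdd hs.continuous C fun p => by simpa using hC p.2

lemma DD_add {f g : SpT n → ℝ} (hf : ContDiff ℝ (⊤ : ℕ∞) f) (hg : ContDiff ℝ (⊤ : ℕ∞) g)
    (v : SpT n) : DD v (f + g) = DD v f + DD v g := by
  ext p
  unfold DD
  rw [fderiv_add (hf.differentiable (by simp)).differentiableAt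
    (hg.differentiable (by simp)).differentiableAt]
  rfl

lemma Pot.add {f g : SpT n → ℝ} (hf : Pot f) (hg : Pot g) : Pot (f + g) :=
  ⟨hf.sm.add hg.sm, hf.m0.add hg.m0,
    fun i => by rw [DD_add hf.sm hg.sm]; exact (hf.m1 i).add (hg.m1 i),
    by rw [DD_add hf.sm hg.sm]; exact hf.mt.add hg.mt⟩

lemma tderiv_eq {ψ : ℝ → EuclideanSpace ℝ (Fin n) → ℂ}
    (hψ : ContDiff ℝ (⊤ : ℕ∞) (fun p : SpT n => ψ p.1 p.2)) :
    (fun p : SpT n => tderiv ψ p.1 p.2) = DD eT (fun p : SpT n => ψ p.1 p.2) := by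
  ext p
  exact (DD_time hψ p.1 p.2).deriv

lemma pd_eq {ψ : ℝ → EuclideanSpace ℝ (Fin n) → ℂ}
    (hψ : ContDiff ℝ (⊤ : ℕ∞) (fun p : SpT n => ψ p.1 p.2)) (t : ℝ) (i : Fin n) :
    pd (ψ t) i = fun x => DD (eS i) (fun p : SpT n => ψ p.1 p.2) (t, x) := by
  ext x
  exact DD_fderiv hψ t x _

lemma comp_of {ψ : ℝ → EuclideanSpace ℝ (Fin n) → ℂ}
    (hψ : ContDiff ℝ (⊤ : ℕ∞) (fun p : SpT n => ψ p.1 p.2))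
    (hS : LocUnifSchwartz ψ) (hS' : LocUnifSchwartz (fun t => tderiv ψ t))
    (L : ℂ →L[ℝ] ℝ) (hL : ∀ z, |L z| ≤ ‖z‖) : Comp (fun p : SpT n => L (ψ p.1 p.2)) := by
  have e := tderiv_eq hψ
  have hs' : ContDiff ℝ (⊤ : ℕ∞) (fun p : SpT n => tderiv ψ p.1 p.2) := e ▸ DD_smooth hψ _
  obtain ⟨g0, g1, g2⟩ := Good.of_LUS hS hψ L hL
  obtain ⟨k0, k1, -⟩ := Good.of_LUS hS' hs' L hL
  have e2 : DD eT (fun p : SpT n => L (ψ p.1 p.2)) = fun p => L (tderiv ψ p.1 p.2) := by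
    rw [DD_L L hψ, ← e]
  exact ⟨L.contDiff.comp hψ, g0, g1, g2, e2 ▸ k0, e2 ▸ k1⟩

end final

/-- The adapted conformal identity for `H(t) = −Δ + V(x) + W(x,t)` (before the
adaptor): for `t > 0`, the derivative of
`(1/t)‖(x−2pt)ψ(t)‖² + 4t∫(V+W)|ψ|²` equals
`−(1/t²)‖(x−2pt)ψ(t)‖² + 4∫(x·∇V+V)|ψ|² + 4∫(x·∇ₓW+W)|ψ|² + 4t∫∂ₜW|ψ|²`. -/
theorem adapted_conformal_identity_scaled {n : ℕ} (hn : 1 ≤ n)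
    (V : EuclideanSpace ℝ (Fin n) → ℝ) (hV : ContDiff ℝ (⊤ : ℕ∞) V)
    (hVbd : ∀ m : ℕ, ∃ C : ℝ, ∀ x, ‖iteratedFDeriv ℝ m V x‖ ≤ C)
    (W : ℝ → EuclideanSpace ℝ (Fin n) → ℝ)
    (hW : ContDiff ℝ (⊤ : ℕ∞) (fun p : ℝ × EuclideanSpace ℝ (Fin n) => W p.1 p.2))
    (hWbd : ∀ m : ℕ, ∃ C : ℝ, ∀ p : ℝ × EuclideanSpace ℝ (Fin n),
      ‖iteratedFDeriv ℝ m (fun q : ℝ × EuclideanSpace ℝ (Fin n) => W q.1 q.2) p‖ ≤ C)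
    (ψ : ℝ → EuclideanSpace ℝ (Fin n) → ℂ)
    (hψ : ContDiff ℝ (⊤ : ℕ∞) (fun p : ℝ × EuclideanSpace ℝ (Fin n) => ψ p.1 p.2))
    (hS : LocUnifSchwartz ψ)
    (hS' : LocUnifSchwartz (fun t => tderiv ψ t))
    (heq : ∀ t x, Complex.I * tderiv ψ t x
      = -lap (ψ t) x + (V x : ℂ) * ψ t x + (W t x : ℂ) * ψ t x) :
    ∀ t : ℝ, 0 < t →
      HasDerivAt (fun s => (1 / s) * conformalFactor ψ s
          + 4 * s * ∫ x : EuclideanSpace ℝ (Fin n), (V x + W s x) * ‖ψ s x‖ ^ 2)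
        (-(1 / t ^ 2) * conformalFactor ψ t
          + 4 * (∫ x : EuclideanSpace ℝ (Fin n), (xdotGrad V x + V x) * ‖ψ t x‖ ^ 2)
          + 4 * (∫ x : EuclideanSpace ℝ (Fin n), (xdotGrad (W t) x + W t x) * ‖ψ t x‖ ^ 2)
          + 4 * t * ∫ x : EuclideanSpace ℝ (Fin n),
              deriv (fun s => W s x) t * ‖ψ t x‖ ^ 2) t := by
  intro t ht
  set Φ : SpT n → ℂ := fun p => ψ p.1 p.2 with hΦ
  set a : SpT n → ℝ := fun p => Complex.reCLM (Φ p) with ha_def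
  set b : SpT n → ℝ := fun p => Complex.imCLM (Φ p) with hb_def
  set Vf : SpT n → ℝ := fun p => V p.2 with hVf
  set Wf : SpT n → ℝ := fun p => W p.1 p.2 with hWf
  have ha : Comp a := comp_of hψ hS hS' Complex.reCLM Complex.abs_re_le_norm
  have hb : Comp b := comp_of hψ hS hS' Complex.imCLM Complex.abs_im_le_norm
  have pV : Pot Vf := pot_V hV hVbd
  have pW : Pot Wf := pot_W hW hWbd
  have hU : Pot (Vf + Wf) := pV.add pW
  have ea : ∀ v, DD v a = fun p => (DD v Φ p).re := fun v => DD_L Complex.reCLM hψ v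
  have eb : ∀ v, DD v b = fun p => (DD v Φ p).im := fun v => DD_L Complex.imCLM hψ v
  have eaa : ∀ v w, DD w (DD v a) = fun p => (DD w (DD v Φ) p).re := fun v w => by
    rw [ea]; exact DD_L Complex.reCLM (DD_smooth hψ v) w
  have ebb : ∀ v w, DD w (DD v b) = fun p => (DD w (DD v Φ) p).im := fun v w => by
    rw [eb]; exact DD_L Complex.imCLM (DD_smooth hψ v) w
  have va : ∀ p, a p = (ψ p.1 p.2).re := fun _ => rfl
  have vb : ∀ p, b p = (ψ p.1 p.2).im := fun _ => rfl
  have vV : ∀ p, Vf p = V p.2 := fun _ => rfl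
  have vW : ∀ p, Wf p = W p.1 p.2 := fun _ => rfl
  have hlap : ∀ p : SpT n, lap (ψ p.1) p.2 = ∑ i, DD (eS i) (DD (eS i) Φ) p := by
    intro p
    unfold lap
    refine Finset.sum_congr rfl fun i _ => ?_
    have : (fun y => pd (ψ p.1) i y) = fun y => DD (eS i) Φ (p.1, y) := pd_eq hψ p.1 i
    rw [this]
    exact congrFun (pd_eq (ψ := fun t y => DD (eS i) Φ (t, y)) (DD_smooth hψ (eS i)) p.1 i) p.2
  have htd : ∀ p : SpT n, tderiv ψ p.1 p.2 = DD eT Φ p := fun p => congrFun (tderiv_eq hψ) p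
  have h1 : ∀ p, ∑ i, DD (eS i) (DD (eS i) a) p = DD eT b p + (Vf + Wf) p * a p := by
    intro p
    have := congrArg Complex.re (heq p.1 p.2)
    rw [htd, hlap] at this
    simp only [eaa, eb, va, vV, vW, Pi.add_apply]
    simp at this
    linarith
  have h2 : ∀ p, ∑ i, DD (eS i) (DD (eS i) b) p = -DD eT a p + (Vf + Wf) p * b p := by
    intro p
    have := congrArg Complex.im (heq p.1 p.2)
    rw [htd, hlap] at this
    simp only [ebb, ea, vb, vV, vW, Pi.add_apply]
    simp at this
    linarith
  have core := core_id hU ha hb h1 h2 t ht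
  have hrh : ∀ s x, ‖ψ s x‖ ^ 2 = rh a b (s, x) := by
    intro s x
    rw [Complex.sq_norm, Complex.normSq_apply]
    rfl
  have hCF : ∀ s, conformalFactor ψ s = ∫ x, Fd a b (s, x) := by
    intro s
    unfold conformalFactor
    congr 1
    ext x
    simp only [Fd, Finset.sum_apply]
    refine Finset.sum_congr rfl fun i _ => ?_
    rw [Complex.sq_norm, Complex.normSq_apply, pd_eq hψ]
    change _ = Aj a b i (s, x) * Aj a b i (s, x) + Bj a b i (s, x) * Bj a b i (s, x)
    simp only [Aj, Bj, ea, eb, Pi.add_apply, Pi.sub_apply, Pi.mul_apply, va, vb]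
    simp [xc, kc, tm, ← hΦ]
    try ring
  have hE : ∀ s, ∫ x, (V x + W s x) * ‖ψ s x‖ ^ 2 = ∫ x, ((Vf + Wf) * rh a b) (s, x) := by
    intro s
    simp only [hrh]
    rfl
  have gr := good_rh ha hb
  have iV : Integrable fun x => ((xU Vf + Vf) * rh a b) (t, x) :=
    (Good.mul_left ((mult_xU pV).add pV.m0) gr).integrable t
  have iW : Integrable fun x => ((xU Wf + Wf) * rh a b) (t, x) :=
    (Good.mul_left ((mult_xU pW).add pW.m0) gr).integrable t
  have i1 : Integrable fun x => (xU (Vf + Wf) * rh a b) (t, x) :=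
    (Good.mul_left (mult_xU hU) gr).integrable t
  have i2 : Integrable fun x => ((Vf + Wf) * rh a b) (t, x) :=
    (Good.mul_left hU.m0 gr).integrable t
  have hIV : ∫ x, (xdotGrad V x + V x) * ‖ψ t x‖ ^ 2 = ∫ x, ((xU Vf + Vf) * rh a b) (t, x) := by
    congr 1
    ext x
    rw [hrh]
    simp [xdotGrad, xU, xc, hVf, DD_V hV, eS]
  have hIW : ∫ x, (xdotGrad (W t) x + W t x) * ‖ψ t x‖ ^ 2
      = ∫ x, ((xU Wf + Wf) * rh a b) (t, x) := by
    congr 1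
    ext x
    rw [hrh]
    have : ∀ i, fderiv ℝ (W t) x (EuclideanSpace.single i 1) = DD (eS i) Wf (t, x) :=
      fun i => DD_fderiv hW t x _
    simp [xdotGrad, xU, xc, this]
    left; rfl
  have hIT : ∫ x, deriv (fun s => W s x) t * ‖ψ t x‖ ^ 2
      = ∫ x, (DD eT (Vf + Wf) * rh a b) (t, x) := by
    congr 1
    ext x
    rw [hrh, DD_add pV.sm pW.sm]
    have e1 : deriv (fun s => W s x) t = DD eT Wf (t, x) := (DD_time hW t x).deriv
    have e2 : DD eT Vf (t, x) = 0 := by rw [hVf, DD_V hV]; simp [eT]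
    simp [e1, e2]
  have hsum : (∫ x, ((xU Vf + Vf) * rh a b) (t, x)) + ∫ x, ((xU Wf + Wf) * rh a b) (t, x)
      = (∫ x, (xU (Vf + Wf) * rh a b) (t, x)) + ∫ x, ((Vf + Wf) * rh a b) (t, x) := by
    rw [← integral_add iV iW, ← integral_add i1 i2]
    congr 1
    ext x
    have : xU (Vf + Wf) = xU Vf + xU Wf := by
      unfold xU
      rw [← Finset.sum_add_distrib]
      exact Finset.sum_congr rfl fun i _ => by rw [DD_add pV.sm pW.sm, mul_add]
    rw [this]
    simp only [Pi.mul_apply, Pi.add_apply]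
    ring
  simp only [hCF, hE]
  rw [hIV, hIW, hIT]
  refine core.congr_deriv ?_
  linear_combination (-4) * hsum

end
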